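/- Let Ω ⊆ ℝ^d be a bounded open set equipped with a Gauss–Green partition K_1, …, K_M with boundary measures σ_j and outward unit normals n_j. Let L : ℝ^d × ℝ × ℝ^d → ℝ be twice continuously differentiable, let U : cl(Ω) → ℝ be continuous with U restricted to each K_j extending to C²(cl(K_j)), let W : cl(Ω) → ℝ be continuous with W restricted to each K_j extending to C¹(cl(K_j)), and let ξ ∈ C¹(cl(Ω); ℝ^d), φ ∈ C¹(cl(Ω)). Assume: (i) (invariance of the Lagrangian) the infinitesimal invariance identity ∇Q_U · L_p(·,U,∇U) + Q_U L_u(·,U,∇U) + div(L(·,U,∇U) ξ) = 0, with Q_U := φ − ξ·∇U, holds at every point of each K_j; and (ii) the discrete Euler–Lagrange identity Σ_j ∫_{K_j} ( −div(L_p(·,U,∇U)) + L_u(·,U,∇U) ) W dx + Σ_j ∫_{∂K_j} ( L_p(·,U,∇U) · n_j ) W dσ_j = 0 holds. Then the discrete Noether conservation law holds: 0 = Σ_j ∫_{K_j} ( −div(L_p(·,U,∇U)) + L_u(·,U,∇U) ) (φ − W) dx + Σ_j ∫_{∂K_j} ( L_p(·,U,∇U) · n_j )(φ − W) dσ_j +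 Σ_j ∫_{∂K_j} L(·,U,∇U) ξ · n_j dσ_j − Σ_j ∫_{K_j} [ L_p(·,U,∇U) · ∇(ξ·∇U) + (ξ·∇U) L_u(·,U,∇U) ] dx. -/

import Mathlib

open MeasureTheory RealInnerProductSpace
open scoped BigOperators

noncomputable section

/-- `ℝ^d` as a Euclidean (inner product) space. -/
abbrev Euc (d : ℕ) := EuclideanSpace ℝ (Fin d)

/-- Divergence of a vector field on `ℝ^d`. -/
noncomputable def pdiv {d : ℕ} (F : Euc d → Euc d) (x : Euc d) : ℝ :=
  ∑ i, fderiv ℝ F x (EuclideanSpace.single i 1) i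

/-- `x ↦ L(x, u(x), ∇u(x))`, the Lagrangian evaluated along `u`. -/
noncomputable def lagAlong {d : ℕ} (L : Euc d → ℝ → Euc d → ℝ) (u : Euc d → ℝ)
    (x : Euc d) : ℝ :=
  L x (u x) (gradient u x)

/-- `L_u(x, u(x), ∇u(x))`, the partial derivative of `L` in its second argument
evaluated along `u`. -/
noncomputable def lagU {d : ℕ} (L : Euc d → ℝ → Euc d → ℝ) (u : Euc d → ℝ)
    (x : Euc d) : ℝ :=
  deriv (fun s => L x s (gradient u x)) (u x)

/-- `L_p(x, u(x), ∇u(x))`, the gradient of `L` in its third argument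
evaluated along `u`. -/
noncomputable def lagP {d : ℕ} (L : Euc d → ℝ → Euc d → ℝ) (u : Euc d → ℝ)
    (x : Euc d) : Euc d :=
  gradient (fun p => L x (u x) p) (gradient u x)

/-- A Gauss–Green partition of a bounded open set `Ω ⊆ ℝ^d`: finitely many pairwise
disjoint open pieces whose closures cover `cl(Ω)`, each equipped with a finite Borel
boundary measure `σ i` supported on `∂(piece i)` and an outward unit normal field,
such that the Gauss–Green (divergence) theorem holds on each piece for `C¹` vector
fields. -/
structure GGPartition (d : ℕ) (Ω : Set (Euc d)) (N : ℕ) where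
  piece : Fin N → Set (Euc d)
  isOpen_piece : ∀ i, IsOpen (piece i)
  disjoint_piece : ∀ i j, i ≠ j → Disjoint (piece i) (piece j)
  cover : (⋃ i, closure (piece i)) = closure Ω
  σ : Fin N → Measure (Euc d)
  σ_finite : ∀ i, IsFiniteMeasure (σ i)
  σ_support : ∀ i, σ i ((frontier (piece i))ᶜ) = 0
  normal : Fin N → Euc d → Euc d
  normal_meas : ∀ i, Measurable (normal i)
  normal_bdd : ∀ i x, ‖normal i x‖ ≤ 1
  normal_unit : ∀ i, ∀ x ∈ frontier (piece i), ‖normal i x‖ = 1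
  gauss_green : ∀ i (F : Euc d → Euc d), ContDiff ℝ 1 F →
    ∫ x in piece i, pdiv F x = ∫ x, ⟪F x, normal i x⟫ ∂(σ i)

/-!
On each piece `K`, integration by parts rewrites the Euler–Lagrange residual tested with `φ` as the
first variation `δA(φ)` of the action `∫_K L(x, u, ∇u)`. Invariance integrates, by Gauss–Green, to
`δA(φ - ξ · ∇u) = -∫_∂K L ξ · n`, and linearity of `δA` turns this into an elementwise Noether
balance for `φ`. Testing the residual with `φ - w` instead of `φ` subtracts the residual tested with
`w`, and over all pieces the latter sum to zero by the discrete Euler–Lagrange identity.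
-/

section Gradient

variable {E F : Type*} [NormedAddCommGroup E] [NormedSpace ℝ E]
  [NormedAddCommGroup F] [InnerProductSpace ℝ F] [CompleteSpace F]

lemma contDiff_gradient_comp {m n : WithTop ℕ∞} {f : E → F → ℝ} {g : E → F}
    (hf : ContDiff ℝ n (Function.uncurry f)) (hg : ContDiff ℝ m g) (hmn : m + 1 ≤ n) :
    ContDiff ℝ m fun x ↦ gradient (f x) (g x) :=
  (InnerProductSpace.toDual ℝ F).symm.toContinuousLinearEquiv.contDiff.comp
    (hf.fderiv hg hmn)

lemma contDiff_gradient {m n : WithTop ℕ∞} {f : F → ℝ} (hf : ContDiff ℝ n f)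
    (hmn : m + 1 ≤ n) : ContDiff ℝ m (gradient f) :=
  contDiff_gradient_comp (f := fun _ : F ↦ f) (hf.comp contDiff_snd) contDiff_id hmn

lemma gradient_fun_sub {f g : F → ℝ} {x : F} (hf : DifferentiableAt ℝ f x)
    (hg : DifferentiableAt ℝ g x) :
    gradient (fun y ↦ f y - g y) x = gradient f x - gradient g x := by
  simp only [gradient, fderiv_fun_sub hf hg, map_sub]

end Gradient

section Divergence

variable {d : ℕ} {F : Euc d → Euc d} {f : Euc d → ℝ}

lemma continuous_pdiv (hF : ContDiff ℝ 1 F) : Continuous (pdiv F) := by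
  have hF' : Continuous (fderiv ℝ F) := hF.continuous_fderiv one_ne_zero
  exact continuous_finsetSum _ fun i _ ↦
    (EuclideanSpace.proj (𝕜 := ℝ) i).continuous.comp (hF'.clm_apply continuous_const)

lemma pdiv_smul {x : Euc d} (hf : DifferentiableAt ℝ f x) (hF : DifferentiableAt ℝ F x) :
    pdiv (fun y ↦ f y • F y) x = f x * pdiv F x + ⟪gradient f x, F x⟫ := by
  have fderiv_single (i : Fin d) :
      fderiv ℝ f x (EuclideanSpace.single i 1) = gradient f x i := by
    rw [← inner_gradient_left, EuclideanSpace.inner_single_right]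
    simp
  simp only [pdiv, fderiv_fun_smul hf hF, add_apply, smul_apply,
    ContinuousLinearMap.smulRight_apply, PiLp.add_apply,
    PiLp.smul_apply, smul_eq_mul, fderiv_single, Finset.sum_add_distrib, Finset.mul_sum,
    PiLp.inner_apply, RCLike.inner_apply, conj_trivial, mul_comm]

end Divergence

section Lagrangian

variable {d : ℕ} {m n : WithTop ℕ∞} {L : Euc d → ℝ → Euc d → ℝ} {u : Euc d → ℝ}

lemma contDiff_lagAlong (hL : ContDiff ℝ m fun q : Euc d × ℝ × Euc d ↦ L q.1 q.2.1 q.2.2)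
    (hu : ContDiff ℝ n u) (hmn : m + 1 ≤ n) : ContDiff ℝ m (lagAlong L u) :=
  hL.comp <| contDiff_id.prodMk <|
    (hu.of_le (le_self_add.trans hmn)).prodMk (contDiff_gradient hu hmn)

lemma continuous_lagU (hL : ContDiff ℝ 1 fun q : Euc d × ℝ × Euc d ↦ L q.1 q.2.1 q.2.2)
    (hu : ContDiff ℝ 1 u) : Continuous (lagU L u) := by
  have hpartial : Continuous fun q : Euc d × ℝ × Euc d ↦
      fderiv ℝ (fun s ↦ L q.1 s q.2.2) q.2.1 :=
    (ContDiff.fderiv (f := fun (q : Euc d × ℝ × Euc d) s ↦ L q.1 s q.2.2) (m := 1) (n := 0)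
      (hL.comp (g := fun q : Euc d × ℝ × Euc d ↦ L q.1 q.2.1 q.2.2)
        (f := fun r : (Euc d × ℝ × Euc d) × ℝ ↦ (r.1.1, r.2, r.1.2.2)) (by fun_prop))
      (by fun_prop) (by norm_num)).continuous
  have hgrad : Continuous (gradient u) := (contDiff_gradient (m := 0) hu (by norm_num)).continuous
  exact (hpartial.comp (continuous_id.prodMk (hu.continuous.prodMk hgrad))).clm_apply
    continuous_const

lemma contDiff_lagP (hL : ContDiff ℝ n fun q : Euc d × ℝ × Euc d ↦ L q.1 q.2.1 q.2.2)
    (hu : ContDiff ℝ n u) (hmn : m + 1 ≤ n) : ContDiff ℝ m (lagP L u) :=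
  contDiff_gradient_comp (f := fun x p ↦ L x (u x) p)
    (hL.comp (g := fun q : Euc d × ℝ × Euc d ↦ L q.1 q.2.1 q.2.2)
      (f := fun r : Euc d × Euc d ↦ (r.1, u r.1, r.2)) (by fun_prop))
    (contDiff_gradient hu hmn) hmn

end Lagrangian

namespace GGPartition

section Integrability

variable {d N : ℕ} {Ω : Set (Euc d)} (T : GGPartition d Ω N) {j : Fin N}

instance isFiniteMeasure_σ (j : Fin N) : IsFiniteMeasure (T.σ j) := T.σ_finite j

lemma isCompact_closure_piece (hΩ : Bornology.IsBounded Ω) (j : Fin N) :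
    IsCompact (closure (T.piece j)) := by
  have hsub : closure (T.piece j) ⊆ closure Ω :=
    T.cover ▸ Set.subset_iUnion (fun i ↦ closure (T.piece i)) j
  exact Metric.isCompact_of_isClosed_isBounded isClosed_closure (hΩ.closure.subset hsub)

lemma restrict_σ_closure_piece (j : Fin N) :
    (T.σ j).restrict (closure (T.piece j)) = T.σ j := by
  have hfrontier : ∀ᵐ x ∂T.σ j, x ∈ frontier (T.piece j) := T.σ_support j
  exact Measure.restrict_eq_self_of_ae_mem
    (hfrontier.mono fun _ hx ↦ frontier_subset_closure hx)

variable {G : Type*} [NormedAddCommGroup G] {f : Euc d → G} {F : Euc d → Euc d}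

lemma integrableOn_piece (hΩ : Bornology.IsBounded Ω)
    (hf : ContinuousOn f (closure (T.piece j))) : IntegrableOn f (T.piece j) :=
  (hf.integrableOn_compact (T.isCompact_closure_piece hΩ j)).mono_set subset_closure

lemma integrable_σ (hΩ : Bornology.IsBounded Ω)
    (hf : ContinuousOn f (closure (T.piece j))) : Integrable f (T.σ j) := by
  rw [← T.restrict_σ_closure_piece j]
  exact hf.integrableOn_compact (T.isCompact_closure_piece hΩ j)

lemma integrable_inner_normal (hΩ : Bornology.IsBounded Ω)
    (hF : ContinuousOn F (closure (T.piece j))) :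
    Integrable (fun x ↦ ⟪F x, T.normal j x⟫) (T.σ j) := by
  have hFint : Integrable F (T.σ j) := T.integrable_σ hΩ hF
  have hmeas : AEStronglyMeasurable (fun x ↦ ⟪F x, T.normal j x⟫) (T.σ j) :=
    hFint.aestronglyMeasurable.inner (T.normal_meas j).aestronglyMeasurable
  refine hFint.norm.mono' hmeas (.of_forall fun x ↦ ?_)
  calc ‖⟪F x, T.normal j x⟫‖ ≤ ‖F x‖ * ‖T.normal j x‖ := norm_inner_le_norm _ _
    _ ≤ ‖F x‖ := mul_le_of_le_one_right (norm_nonneg _) (T.normal_bdd j x)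

lemma integral_inner_normal_mul (j : Fin N) {g : Euc d → ℝ} (hF : ContDiff ℝ 1 F)
    (hg : ContDiff ℝ 1 g) :
    ∫ x, ⟪F x, T.normal j x⟫ * g x ∂T.σ j
      = ∫ x in T.piece j, (g x * pdiv F x + ⟪gradient g x, F x⟫) := by
  calc ∫ x, ⟪F x, T.normal j x⟫ * g x ∂T.σ j
      = ∫ x, ⟪g x • F x, T.normal j x⟫ ∂T.σ j := by simp only [real_inner_smul_left, mul_comm]
    _ = ∫ x in T.piece j, pdiv (fun y ↦ g y • F y) x := (T.gauss_green j _ (hg.smul hF)).symm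
    _ = _ := by
      simp only [pdiv_smul (hg.differentiable one_ne_zero _) (hF.differentiable one_ne_zero _)]

end Integrability

section Variation

variable {d N : ℕ} {Ω : Set (Euc d)} (T : GGPartition d Ω N) {j : Fin N}
  {L : Euc d → ℝ → Euc d → ℝ} {u v w q : Euc d → ℝ} {ξ : Euc d → Euc d}

/-- The first variation at `u`, in the direction `v`, of the action `∫_{K_j} L(x, u, ∇u) dx`. -/
def firstVariation (L : Euc d → ℝ → Euc d → ℝ) (j : Fin N) (u v : Euc d → ℝ) : ℝ :=
  ∫ x in T.piece j, (⟪lagP L u x, gradient v x⟫ + v x * lagU L u x)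

/-- The Euler–Lagrange residual of `u` on `K_j`, tested with `v`: the strong form in the interior
together with the natural boundary term. It makes sense for `v` without derivatives. -/
def eulerLagrangeResidual (L : Euc d → ℝ → Euc d → ℝ) (j : Fin N) (u v : Euc d → ℝ) : ℝ :=
  (∫ x in T.piece j, (-(pdiv (lagP L u) x) + lagU L u x) * v x)
    + ∫ x, ⟪lagP L u x, T.normal j x⟫ * v x ∂T.σ j

/-- The flux `∫_{∂K_j} L(x, u, ∇u) ξ · n_j dσ_j` of the Lagrangian transported by `ξ`. -/
def lagrangianFlux (L : Euc d → ℝ → Euc d → ℝ) (j : Fin N) (u : Euc d → ℝ)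
    (ξ : Euc d → Euc d) : ℝ :=
  ∫ x, lagAlong L u x * ⟪ξ x, T.normal j x⟫ ∂T.σ j

lemma firstVariation_sub (hΩ : Bornology.IsBounded Ω)
    (hL : ContDiff ℝ 1 fun q : Euc d × ℝ × Euc d ↦ L q.1 q.2.1 q.2.2)
    (hu : ContDiff ℝ 1 u) (hv : ContDiff ℝ 1 v) (hw : ContDiff ℝ 1 w) :
    T.firstVariation L j u (fun x ↦ v x - w x)
      = T.firstVariation L j u v - T.firstVariation L j u w := by
  have hFV {g : Euc d → ℝ} (hg : ContDiff ℝ 1 g) :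
      IntegrableOn (fun x ↦ ⟪lagP L u x, gradient g x⟫ + g x * lagU L u x) (T.piece j) :=
    T.integrableOn_piece hΩ <| Continuous.continuousOn <|
      ((contDiff_lagP (m := 0) hL hu (by norm_num)).continuous.inner
        (contDiff_gradient (m := 0) hg (by norm_num)).continuous).add
      (hg.continuous.mul (continuous_lagU hL hu))
  simp only [firstVariation]
  rw [← integral_sub (hFV hv) (hFV hw)]
  congr with x
  rw [gradient_fun_sub (hv.differentiable one_ne_zero x) (hw.differentiable one_ne_zero x),
    inner_sub_right]
  ring

lemma eulerLagrangeResidual_sub (hΩ : Bornology.IsBounded Ω)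
    (hL : ContDiff ℝ 2 fun q : Euc d × ℝ × Euc d ↦ L q.1 q.2.1 q.2.2)
    (hu : ContDiff ℝ 2 u) (hv : ContinuousOn v (closure (T.piece j)))
    (hw : ContinuousOn w (closure (T.piece j))) :
    T.eulerLagrangeResidual L j u (fun x ↦ v x - w x)
      = T.eulerLagrangeResidual L j u v - T.eulerLagrangeResidual L j u w := by
  have hP : ContDiff ℝ 1 (lagP L u) := contDiff_lagP hL hu (by norm_num)
  have hvol {g : Euc d → ℝ} (hg : ContinuousOn g (closure (T.piece j))) :
      IntegrableOn (fun x ↦ (-(pdiv (lagP L u) x) + lagU L u x) * g x) (T.piece j) :=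
    T.integrableOn_piece hΩ <| ((continuous_pdiv hP).neg.add
      (continuous_lagU (hL.of_le one_le_two) (hu.of_le one_le_two))).continuousOn.mul hg
  have hbdry {g : Euc d → ℝ} (hg : ContinuousOn g (closure (T.piece j))) :
      Integrable (fun x ↦ ⟪lagP L u x, T.normal j x⟫ * g x) (T.σ j) := by
    simpa only [Pi.smul_apply', real_inner_smul_left, mul_comm] using
      T.integrable_inner_normal hΩ (hg.smul hP.continuous.continuousOn)
  simp only [eulerLagrangeResidual, mul_sub]
  rw [integral_sub (hvol hv) (hvol hw), integral_sub (hbdry hv) (hbdry hw)]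
  ring

lemma eulerLagrangeResidual_eq_firstVariation (hΩ : Bornology.IsBounded Ω)
    (hL : ContDiff ℝ 2 fun q : Euc d × ℝ × Euc d ↦ L q.1 q.2.1 q.2.2)
    (hu : ContDiff ℝ 2 u) (hv : ContDiff ℝ 1 v) :
    T.eulerLagrangeResidual L j u v = T.firstVariation L j u v := by
  have hP : ContDiff ℝ 1 (lagP L u) := contDiff_lagP hL hu (by norm_num)
  have hdiv : Continuous (pdiv (lagP L u)) := continuous_pdiv hP
  have hU : Continuous (lagU L u) := continuous_lagU (hL.of_le one_le_two) (hu.of_le one_le_two)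
  have hgrad : Continuous (gradient v) :=
    (contDiff_gradient (m := 0) hv (by norm_num)).continuous
  have hvol : IntegrableOn (fun x ↦ (-(pdiv (lagP L u) x) + lagU L u x) * v x) (T.piece j) :=
    T.integrableOn_piece hΩ ((hdiv.neg.add hU).mul hv.continuous).continuousOn
  have hparts :
      IntegrableOn (fun x ↦ v x * pdiv (lagP L u) x + ⟪gradient v x, lagP L u x⟫) (T.piece j) :=
    T.integrableOn_piece hΩ
      ((hv.continuous.mul hdiv).add (hgrad.inner hP.continuous)).continuousOn
  rw [eulerLagrangeResidual, firstVariation, T.integral_inner_normal_mul j hP hv,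
    ← integral_add hvol hparts]
  congr with x
  rw [real_inner_comm (gradient v x)]
  ring

lemma firstVariation_eq_neg_lagrangianFlux
    (hL : ContDiff ℝ 1 fun q : Euc d × ℝ × Euc d ↦ L q.1 q.2.1 q.2.2)
    (hu : ContDiff ℝ 2 u) (hξ : ContDiff ℝ 1 ξ)
    (hinv : ∀ x ∈ T.piece j, ⟪gradient q x, lagP L u x⟫ + q x * lagU L u x
      + pdiv (fun y ↦ lagAlong L u y • ξ y) x = 0) :
    T.firstVariation L j u q = -T.lagrangianFlux L j u ξ := by
  have hflux : T.lagrangianFlux L j u ξ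
      = ∫ x in T.piece j, pdiv (fun y ↦ lagAlong L u y • ξ y) x := by
    simp only [lagrangianFlux, ← real_inner_smul_left]
    exact (T.gauss_green j _ ((contDiff_lagAlong hL hu (by norm_num)).smul hξ)).symm
  rw [hflux, ← integral_neg, firstVariation]
  refine setIntegral_congr_fun (T.isOpen_piece j).measurableSet fun x hx ↦ ?_
  rw [real_inner_comm]
  exact eq_neg_of_add_eq_zero_left (hinv x hx)

lemma noether_balance (hΩ : Bornology.IsBounded Ω)
    (hL : ContDiff ℝ 2 fun q : Euc d × ℝ × Euc d ↦ L q.1 q.2.1 q.2.2)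
    (hu : ContDiff ℝ 2 u) (hξ : ContDiff ℝ 1 ξ) (hv : ContDiff ℝ 1 v) (hq : ContDiff ℝ 1 q)
    (hinv : ∀ x ∈ T.piece j,
      ⟪gradient (fun y ↦ v y - q y) x, lagP L u x⟫ + (v x - q x) * lagU L u x
        + pdiv (fun y ↦ lagAlong L u y • ξ y) x = 0)
    (hw : ContinuousOn w (closure (T.piece j))) :
    T.eulerLagrangeResidual L j u (fun x ↦ v x - w x) + T.lagrangianFlux L j u ξ
      - T.firstVariation L j u q = -T.eulerLagrangeResidual L j u w := by
  have hvar : T.firstVariation L j u v - T.firstVariation L j u q = -T.lagrangianFlux L j u ξ := by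
    rw [← T.firstVariation_sub hΩ (hL.of_le one_le_two) (hu.of_le one_le_two) hv hq]
    exact T.firstVariation_eq_neg_lagrangianFlux (hL.of_le one_le_two) hu hξ hinv
  rw [T.eulerLagrangeResidual_sub hΩ hL hu hv.continuous.continuousOn hw,
    T.eulerLagrangeResidual_eq_firstVariation hΩ hL hu hv]
  linarith

end Variation

end GGPartition

theorem discrete_noether_conservation_general {d M : ℕ} {Ω : Set (Euc d)}
    (hΩ : Bornology.IsBounded Ω) (T : GGPartition d Ω M) {L : Euc d → ℝ → Euc d → ℝ}
    (hL : ContDiff ℝ 2 fun q : Euc d × ℝ × Euc d ↦ L q.1 q.2.1 q.2.2)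
    {u : Fin M → Euc d → ℝ} (hu : ∀ j, ContDiff ℝ 2 (u j))
    {w : Fin M → Euc d → ℝ} (hw : ∀ j, ContinuousOn (w j) (closure (T.piece j)))
    {ξ : Euc d → Euc d} (hξ : ContDiff ℝ 1 ξ) {φ : Euc d → ℝ} (hφ : ContDiff ℝ 1 φ)
    (hinv : ∀ j, ∀ x ∈ T.piece j,
      ⟪gradient (fun y ↦ φ y - ⟪ξ y, gradient (u j) y⟫) x, lagP L (u j) x⟫
        + (φ x - ⟪ξ x, gradient (u j) x⟫) * lagU L (u j) x
        + pdiv (fun y ↦ lagAlong L (u j) y • ξ y) x = 0)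
    (hdEL : ∑ j, T.eulerLagrangeResidual L j (u j) (w j) = 0) :
    0 = ∑ j, T.eulerLagrangeResidual L j (u j) (fun x ↦ φ x - w j x)
      + ∑ j, T.lagrangianFlux L j (u j) ξ
      - ∑ j, T.firstVariation L j (u j) (fun x ↦ ⟪ξ x, gradient (u j) x⟫) := by
  have hq (j : Fin M) : ContDiff ℝ 1 fun x ↦ ⟪ξ x, gradient (u j) x⟫ :=
    hξ.inner ℝ (contDiff_gradient (hu j) (by norm_num))
  rw [← Finset.sum_add_distrib, ← Finset.sum_sub_distrib,
    Finset.sum_congr rfl fun j _ ↦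
      T.noether_balance hΩ hL (hu j) hξ hφ (hq j) (hinv j) (hw j),
    Finset.sum_neg_distrib, hdEL, neg_zero]

/-- discrete Noether conservation law over `C⁰` finite element
spaces: if the Lagrangian is infinitesimally invariant along the piecewise-`C²`
finite element function `U` on each element, and the discrete Euler–Lagrange
identity holds when tested with the continuous piecewise-`C¹` function `W`, then
the discrete Noether conservation law holds. -/
theorem discrete_noether_conservation {d M : ℕ} (Ω : Set (Euc d))
    (hΩo : IsOpen Ω) (hΩb : Bornology.IsBounded Ω)
    (T : GGPartition d Ω M)
    (L : Euc d → ℝ → Euc d → ℝ)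
    (hL : ContDiff ℝ 2 (fun q : Euc d × ℝ × Euc d => L q.1 q.2.1 q.2.2))
    (U : Euc d → ℝ) (hU : ContinuousOn U (closure Ω))
    (Uext : Fin M → Euc d → ℝ) (hUext : ∀ j, ContDiff ℝ 2 (Uext j))
    (hUagree : ∀ j, ∀ x ∈ T.piece j, U x = Uext j x)
    (W : Euc d → ℝ) (hW : ContinuousOn W (closure Ω))
    (Wext : Fin M → Euc d → ℝ) (hWext : ∀ j, ContDiff ℝ 1 (Wext j))
    (hWagree : ∀ j, ∀ x ∈ T.piece j, W x = Wext j x)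
    (ξ : Euc d → Euc d) (hξ : ContDiff ℝ 1 ξ)
    (φ : Euc d → ℝ) (hφ : ContDiff ℝ 1 φ)
    (hinv : ∀ j, ∀ x ∈ T.piece j,
      ⟪gradient (fun y => φ y - ⟪ξ y, gradient (Uext j) y⟫) x, lagP L (Uext j) x⟫
        + (φ x - ⟪ξ x, gradient (Uext j) x⟫) * lagU L (Uext j) x
        + pdiv (fun y => lagAlong L (Uext j) y • ξ y) x = 0)
    (hdEL : (∑ j, ∫ x in T.piece j,
          (-(pdiv (lagP L (Uext j)) x) + lagU L (Uext j) x) * Wext j x)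
      + (∑ j, ∫ x, ⟪lagP L (Uext j) x, T.normal j x⟫ * Wext j x ∂(T.σ j)) = 0) :
    0 = (∑ j, ∫ x in T.piece j,
          (-(pdiv (lagP L (Uext j)) x) + lagU L (Uext j) x) * (φ x - Wext j x))
      + (∑ j, ∫ x, ⟪lagP L (Uext j) x, T.normal j x⟫ * (φ x - Wext j x) ∂(T.σ j))
      + (∑ j, ∫ x, lagAlong L (Uext j) x * ⟪ξ x, T.normal j x⟫ ∂(T.σ j))
      - ∑ j, ∫ x in T.piece j,
          (⟪lagP L (Uext j) x, gradient (fun y => ⟪ξ y, gradient (Uext j) y⟫) x⟫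
            + ⟪ξ x, gradient (Uext j) x⟫ * lagU L (Uext j) x) := by
  simpa only [GGPartition.eulerLagrangeResidual, GGPartition.lagrangianFlux,
      GGPartition.firstVariation, Finset.sum_add_distrib] using
    discrete_noether_conservation_general hΩb T hL hUext
      (fun j ↦ (hWext j).continuous.continuousOn) hξ hφ hinv
      (by simpa only [GGPartition.eulerLagrangeResidual, Finset.sum_add_distrib] using hdEL)
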